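/- Let K ⊂ ℝ³ be compact and δ > 0 be such that for every point (r₀, z) ∈ K one has η(q) = 1 for all q ∈ ℝ² with |q − r₀| ≤ 2δ. Then for every c₀ > 0 and every n ∈ ℕ there is a constant C = C(n, c₀, K, η) such that |p_k(r) − 2π k^{−1} cos(kz)| ≤ C (Re k)^{−n} for all r = (r₀, z) ∈ K and all k ∈ ℂ with Re k ≥ 1 and |Im k| ≤ c₀. -/

import Mathlib

open MeasureTheory Real Classical
open scoped RealInnerProductSpace

noncomputable section

abbrev E2 := EuclideanSpace ℝ (Fin 2)
abbrev E3 := EuclideanSpace ℝ (Fin 3)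

/-- The kernel `S_k(v) = sin(k|v|)/|v|`, with the removable singularity at `0` filled
in by the value `k`. -/
def Skern (k : ℂ) (v : E3) : ℂ :=
  if v = 0 then k else Complex.sin (k * ‖v‖) / (‖v‖ : ℂ)

/-- The embedding `q ↦ (q, 0)` of `ℝ²` into `ℝ³`. -/
def emb2 (q : E2) : E3 := (WithLp.equiv 2 (Fin 3 → ℝ)).symm ![q 0, q 1, 0]

/-- `p_k(r) = ∫_{ℝ²} η(q) S_k(r - (q,0)) dq`. -/
def pfun (η : E2 → ℝ) (k : ℂ) (r : E3) : ℂ :=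
  ∫ q : E2, (η q : ℂ) * Skern k (r - emb2 q)

/-- The projection of an `ℝ³` point onto its first two coordinates. -/
def proj32 (r : E3) : E2 := (WithLp.equiv 2 (Fin 2 → ℝ)).symm ![r 0, r 1]

/-!
On a ray `ρ ↦ r₀ + ρe`, with `φ(ρ) = √(ρ² + z²)`, the polar weight makes the kernel exact:
`ρ S_k(φ) = -k⁻¹ ∂_ρ cos(kφ)`. Integrating by parts, the endpoint `ρ = 0`, where `η = 1`,
contributes `k⁻¹ cos(kz)` on each ray, hence `2π k⁻¹ cos(kz)` over the circle of directions. What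
remains is `k⁻¹ ∫ cos(kφ) ∂_ρη dρ`: since `∂_ρη` vanishes near `ρ = 0`, the only possible stationary
point of `φ`, repeated integration by parts makes it `O(|k|⁻ⁿ⁻¹)`, uniformly because the parameters
`(r₀, z, e)` range over a compact set and `e^{±ikφ}` is bounded as long as `Im k` is.
-/

open Set Topology

section PartialDeriv

variable {V F : Type*} [NormedAddCommGroup F] [NormedSpace ℝ F] {f : ℝ × V → F}

/-- The partial derivative `∂f/∂ρ` of a function `f (ρ, p)` of a real variable `ρ` and a
parameter `p`. -/
def derivFst (f : ℝ × V → F) (x : ℝ × V) : F := deriv (fun ρ => f (ρ, x.2)) x.1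

theorem derivFst_eventuallyEq_zero {p : V} {a : ℝ} {y : F}
    (hf : (fun ρ => f (ρ, p)) =ᶠ[𝓝 a] fun _ => y) : (fun ρ => derivFst f (ρ, p)) =ᶠ[𝓝 a] 0 :=
  hf.deriv.trans (by rw [deriv_const']; rfl)

variable [NormedAddCommGroup V] [NormedSpace ℝ V] {U : Set (ℝ × V)}

theorem derivFst_eq_fderiv {x : ℝ × V} (hf : DifferentiableAt ℝ f x) :
    derivFst f x = fderiv ℝ f x (1, 0) :=
  (hf.hasFDerivAt.comp_hasDerivAt x.1
    ((hasDerivAt_id x.1).prodMk (hasDerivAt_const x.1 x.2))).deriv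

theorem hasDerivAt_derivFst (hU : IsOpen U) {n : WithTop ℕ∞} (hf : ContDiffOn ℝ n f U)
    (hn : n ≠ 0) {ρ : ℝ} {p : V} (hx : (ρ, p) ∈ U) :
    HasDerivAt (fun t => f (t, p)) (derivFst f (ρ, p)) ρ :=
  have hdiff : DifferentiableAt ℝ f (ρ, p) :=
    (hf.contDiffAt (hU.mem_nhds hx)).differentiableAt hn
  (hdiff.comp (f := fun t : ℝ => (t, p)) ρ (by fun_prop)).hasDerivAt

theorem contDiffOn_derivFst {n : WithTop ℕ∞} (hU : IsOpen U) (hf : ContDiffOn ℝ (n + 1) f U) :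
    ContDiffOn ℝ n (derivFst f) U :=
  ((hf.fderiv_of_isOpen hU le_rfl).clm_apply contDiffOn_const).congr fun _ hx =>
    derivFst_eq_fderiv ((hf.contDiffAt (hU.mem_nhds hx)).differentiableAt (by simp))

end PartialDeriv

section NonstationaryPhase

variable {F : Type*} [NormedAddCommGroup F] [NormedSpace ℂ F]

theorem integral_cexp_smul_deriv [CompleteSpace F] {a b : ℝ} {φ φ' : ℝ → ℝ} {g g' : ℝ → F}
    (hφ : ∀ ρ ∈ uIcc a b, HasDerivAt φ (φ' ρ) ρ) (hφ' : ContinuousOn φ' (uIcc a b))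
    (hg : ∀ ρ ∈ uIcc a b, HasDerivAt g (g' ρ) ρ) (hg' : ContinuousOn g' (uIcc a b))
    (ha : g a = 0) (hb : g b = 0) (w : ℂ) :
    ∫ ρ in a..b, Complex.exp (w * φ ρ) • g' ρ =
      -(w • ∫ ρ in a..b, Complex.exp (w * φ ρ) • φ' ρ • g ρ) := by
  have hexp : ∀ ρ ∈ uIcc a b, HasDerivAt (fun t => Complex.exp (w * φ t))
      (Complex.exp (w * φ ρ) * (w * φ' ρ)) ρ := fun ρ hρ =>
    ((hφ ρ hρ).ofReal_comp.const_mul w).cexp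
  have hexp_cont : ContinuousOn (fun t => Complex.exp (w * φ t)) (uIcc a b) := fun ρ hρ =>
    (hexp ρ hρ).continuousAt.continuousWithinAt
  have mem_uIcc : ∀ ρ ∈ Ioo (min a b) (max a b), ρ ∈ uIcc a b := fun ρ hρ =>
    Ioo_subset_Icc_self hρ
  rw [intervalIntegral.integral_smul_deriv_eq_deriv_smul_of_hasDeriv_right hexp_cont
    (fun ρ hρ => (hg ρ hρ).continuousAt.continuousWithinAt)
    (fun ρ hρ => (hexp ρ (mem_uIcc ρ hρ)).hasDerivWithinAt)
    (fun ρ hρ => (hg ρ (mem_uIcc ρ hρ)).hasDerivWithinAt)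
    (ContinuousOn.intervalIntegrable <| hexp_cont.mul <|
      continuousOn_const.mul <| Complex.continuous_ofReal.comp_continuousOn hφ')
    hg'.intervalIntegrable, ha, hb, ← intervalIntegral.integral_smul]
  simp only [smul_zero, sub_zero, zero_sub]
  congr 2 with ρ
  rw [smul_comm w, mul_smul, mul_smul, Complex.coe_smul]

theorem exists_norm_integral_cexp_smul_le_const {V : Type*} [TopologicalSpace V] {P : Set V}
    (hP : IsCompact P) {a b : ℝ} {φ : ℝ × V → ℝ} (hφ : ContinuousOn φ (uIcc a b ×ˢ P))
    {G : ℝ × V → F} (hG : ContinuousOn G (uIcc a b ×ˢ P)) (c : ℝ) :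
    ∃ C, ∀ p ∈ P, ∀ w : ℂ, |w.re| ≤ c →
      ‖∫ ρ in a..b, Complex.exp (w * φ (ρ, p)) • G (ρ, p)‖ ≤ C := by
  have hcomp : IsCompact (uIcc a b ×ˢ P) := isCompact_uIcc.prod hP
  obtain ⟨M, hM⟩ := hcomp.exists_bound_of_continuousOn hG
  obtain ⟨N, hN⟩ := hcomp.exists_bound_of_continuousOn hφ
  refine ⟨Real.exp (c * N) * M * |b - a|, fun p hp w hw =>
    intervalIntegral.norm_integral_le_of_norm_le_const fun ρ hρ => ?_⟩
  have hρp : (ρ, p) ∈ uIcc a b ×ˢ P := ⟨uIoc_subset_uIcc hρ, hp⟩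
  have hre : (w * φ (ρ, p)).re ≤ c * N :=
    calc (w * φ (ρ, p)).re = w.re * φ (ρ, p) := Complex.re_mul_ofReal _ _
      _ ≤ |w.re| * |φ (ρ, p)| := (le_abs_self _).trans (abs_mul _ _).le
      _ ≤ c * N := mul_le_mul hw (hN _ hρp) (abs_nonneg _) ((abs_nonneg _).trans hw)
  rw [norm_smul, Complex.norm_exp]
  gcongr
  exact hM _ hρp

variable {V : Type*} [NormedAddCommGroup V] [NormedSpace ℝ V]

theorem exists_norm_integral_cexp_smul_le [CompleteSpace F] {P : Set V} (hP : IsCompact P)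
    {U : Set (ℝ × V)} (hU : IsOpen U) {a b : ℝ} (hPU : uIcc a b ×ˢ P ⊆ U) {φ : ℝ × V → ℝ}
    (n : ℕ) (hφ : ContDiffOn ℝ (n + 1) φ U) (hφ' : ∀ x ∈ U, derivFst φ x ≠ 0)
    {G : ℝ × V → F} (hG : ContDiffOn ℝ n G U) (c : ℝ) :
    ∃ C, ∀ p ∈ P, (fun ρ => G (ρ, p)) =ᶠ[𝓝 a] 0 → (fun ρ => G (ρ, p)) =ᶠ[𝓝 b] 0 →
      ∀ w : ℂ, w ≠ 0 → |w.re| ≤ c →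
        ‖∫ ρ in a..b, Complex.exp (w * φ (ρ, p)) • G (ρ, p)‖ ≤ C / ‖w‖ ^ n := by
  induction n generalizing G with
  | zero =>
    obtain ⟨C, hC⟩ := exists_norm_integral_cexp_smul_le_const hP (hφ.continuousOn.mono hPU)
      (hG.continuousOn.mono hPU) c
    exact ⟨C, fun p hp _ _ w _ hw => by simpa using hC p hp w hw⟩
  | succ n ih =>
    push_cast at hφ hG
    -- With `G = ∂φ • g`, integrating by parts trades a factor `w` for the amplitude `-∂g`, which is
    -- flat at the endpoints again.
    have hφ_smooth : ContDiffOn ℝ (n + 1) (derivFst φ) U := contDiffOn_derivFst hU hφ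
    let g : ℝ × V → F := fun x => (derivFst φ x)⁻¹ • G x
    have hg : ContDiffOn ℝ (n + 1) g U := (hφ_smooth.inv hφ').smul hG
    have hg' : ContDiffOn ℝ n (derivFst g) U := contDiffOn_derivFst hU hg
    obtain ⟨C, hC⟩ := ih (hφ.of_le (by simp)) hg'
    refine ⟨C, fun p hp ha hb w hw hwc => ?_⟩
    have g_flat : ∀ t, (fun ρ => G (ρ, p)) =ᶠ[𝓝 t] 0 → (fun ρ => g (ρ, p)) =ᶠ[𝓝 t] 0 :=
      fun t ht => ht.mono fun ρ hρ => by simp_all [g]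
    have hin : ∀ ρ ∈ uIcc a b, (ρ, p) ∈ U := fun ρ hρ => hPU ⟨hρ, hp⟩
    have hslice : ContinuousOn (fun ρ : ℝ => (ρ, p)) (uIcc a b) := by fun_prop
    have by_parts := integral_cexp_smul_deriv
      (fun _ hρ => hasDerivAt_derivFst hU hφ (by simp) (hin _ hρ))
      (hφ_smooth.continuousOn.comp hslice hin)
      (fun _ hρ => hasDerivAt_derivFst hU hg (by simp) (hin _ hρ))
      (hg'.continuousOn.comp hslice hin)
      (g_flat a ha).self_of_nhds (g_flat b hb).self_of_nhds w
    have amplitude : ∫ ρ in a..b, Complex.exp (w * φ (ρ, p)) • G (ρ, p) =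
        ∫ ρ in a..b, Complex.exp (w * φ (ρ, p)) • derivFst φ (ρ, p) • g (ρ, p) :=
      intervalIntegral.integral_congr fun ρ hρ => by
        simp only [g, smul_inv_smul₀ (hφ' _ (hin ρ hρ))]
    have hw_pos : 0 < ‖w‖ := norm_pos_iff.2 hw
    rw [pow_succ, ← div_div, le_div_iff₀ hw_pos, mul_comm, ← norm_smul, amplitude, ← norm_neg,
      ← by_parts]
    exact hC p hp (derivFst_eventuallyEq_zero (g_flat a ha))
      (derivFst_eventuallyEq_zero (g_flat b hb)) w hw hwc

theorem exists_norm_integral_cos_smul_le [CompleteSpace F] {P : Set V} (hP : IsCompact P)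
    {U : Set (ℝ × V)} (hU : IsOpen U) {a b : ℝ} (hPU : uIcc a b ×ˢ P ⊆ U) {φ : ℝ × V → ℝ}
    (n : ℕ) (hφ : ContDiffOn ℝ (n + 1) φ U) (hφ' : ∀ x ∈ U, derivFst φ x ≠ 0)
    {G : ℝ × V → F} (hG : ContDiffOn ℝ n G U) (c : ℝ) :
    ∃ C, ∀ p ∈ P, (fun ρ => G (ρ, p)) =ᶠ[𝓝 a] 0 → (fun ρ => G (ρ, p)) =ᶠ[𝓝 b] 0 →
      ∀ k : ℂ, k ≠ 0 → |k.im| ≤ c →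
        ‖∫ ρ in a..b, Complex.cos (k * φ (ρ, p)) • G (ρ, p)‖ ≤ C / ‖k‖ ^ n := by
  obtain ⟨C, hC⟩ := exists_norm_integral_cexp_smul_le hP hU hPU n hφ hφ' hG c
  refine ⟨C, fun p hp ha hb k hk hkc => ?_⟩
  have integrable : ∀ w : ℂ, IntervalIntegrable
      (fun ρ => Complex.exp (w * φ (ρ, p)) • G (ρ, p)) volume a b := fun w => by
    have hin : ∀ ρ ∈ uIcc a b, (ρ, p) ∈ U := fun ρ hρ => hPU ⟨hρ, hp⟩
    have hslice : ContinuousOn (fun ρ : ℝ => (ρ, p)) (uIcc a b) := by fun_prop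
    exact ((continuousOn_const.mul (Complex.continuous_ofReal.comp_continuousOn
      (hφ.continuousOn.comp hslice hin))).cexp.smul
      (hG.continuousOn.comp hslice hin)).intervalIntegrable
  have euler : ∫ ρ in a..b, Complex.cos (k * φ (ρ, p)) • G (ρ, p) =
      (2 : ℂ)⁻¹ • ((∫ ρ in a..b, Complex.exp (k * Complex.I * φ (ρ, p)) • G (ρ, p)) +
        ∫ ρ in a..b, Complex.exp (-k * Complex.I * φ (ρ, p)) • G (ρ, p)) := by
    rw [← intervalIntegral.integral_add (integrable _) (integrable _),
      ← intervalIntegral.integral_smul]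
    congr 1 with ρ
    rw [Complex.cos, ← add_smul, smul_smul, div_eq_inv_mul]
    ring_nf
  have hpos := hC p hp ha hb (k * Complex.I) (by simpa using hk) (by simpa using hkc)
  have hneg := hC p hp ha hb (-k * Complex.I) (by simpa using hk) (by simpa using hkc)
  rw [norm_mul, Complex.norm_I, mul_one] at hpos hneg
  rw [norm_neg] at hneg
  rw [euler, norm_smul, norm_inv, Complex.norm_ofNat, inv_mul_le_iff₀ two_pos, two_mul]
  exact (norm_add_le _ _).trans (add_le_add hpos hneg)

end NonstationaryPhase

section SineKernel

/-- The profile `t ↦ sin (k t) / t` of the kernel `Skern k`, as a divided difference so that the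
removable singularity at `0` carries the value `k`. -/
def sinKernel (k : ℂ) (t : ℝ) : ℂ := dslope (fun x : ℂ => Complex.sin (k * x)) 0 t

theorem continuous_sinKernel (k : ℂ) : Continuous (sinKernel k) := by
  have hdslope : Continuous (dslope (fun x : ℂ => Complex.sin (k * x)) 0) := by
    rw [← continuousOn_univ, continuousOn_dslope Filter.univ_mem]
    exact ⟨by fun_prop, by fun_prop⟩
  exact hdslope.comp Complex.continuous_ofReal

theorem sinKernel_zero (k : ℂ) : sinKernel k 0 = k := by
  have hderiv : HasDerivAt (fun x : ℂ => Complex.sin (k * x)) (Complex.cos (k * 0) * (k * 1)) 0 :=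
    ((hasDerivAt_id (0 : ℂ)).const_mul k).csin
  rw [sinKernel, Complex.ofReal_zero, dslope_same, hderiv.deriv]
  simp

theorem sinKernel_of_ne (k : ℂ) {t : ℝ} (ht : t ≠ 0) : sinKernel k t = Complex.sin (k * t) / t := by
  rw [sinKernel, dslope_of_ne _ (Complex.ofReal_ne_zero.2 ht), slope_def_field]
  simp

theorem Skern_eq_sinKernel_norm (k : ℂ) (v : E3) : Skern k v = sinKernel k ‖v‖ := by
  rcases eq_or_ne v 0 with rfl | hv
  · simp [Skern, sinKernel_zero]
  · rw [Skern, if_neg hv, sinKernel_of_ne k (norm_ne_zero_iff.2 hv)]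

theorem hasDerivAt_sqrt_sq_add_sq {ρ : ℝ} (hρ : 0 < ρ) (z : ℝ) :
    HasDerivAt (fun t => √(t ^ 2 + z ^ 2)) (ρ / √(ρ ^ 2 + z ^ 2)) ρ := by
  have hsq : HasDerivAt (fun t : ℝ => t ^ 2 + z ^ 2) (2 * ρ) ρ := by
    simpa using (hasDerivAt_pow 2 ρ).add_const (z ^ 2)
  simpa only [mul_div_mul_left _ _ (two_ne_zero' ℝ)] using hsq.sqrt (by positivity)

theorem hasDerivAt_cos_mul_sqrt_sq_add_sq (k : ℂ) {ρ : ℝ} (hρ : 0 < ρ) (z : ℝ) :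
    HasDerivAt (fun t : ℝ => Complex.cos (k * √(t ^ 2 + z ^ 2)))
      (-k * (ρ * sinKernel k √(ρ ^ 2 + z ^ 2))) ρ := by
  have hs : √(ρ ^ 2 + z ^ 2) ≠ 0 := by positivity
  refine HasDerivAt.congr_deriv (HasDerivAt.comp ρ (Complex.hasDerivAt_cos _)
    ((hasDerivAt_sqrt_sq_add_sq hρ z).ofReal_comp.const_mul k)) ?_
  rw [sinKernel_of_ne k hs]
  push_cast
  ring

theorem cos_mul_sqrt_sq (k : ℂ) (z : ℝ) : Complex.cos (k * √(z ^ 2)) = Complex.cos (k * z) := by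
  rw [Real.sqrt_sq_eq_abs]
  rcases abs_choice z with h | h <;> simp [h]

theorem integral_mul_sinKernel (k : ℂ) (z : ℝ) {b : ℝ} (hb : 0 ≤ b) {g g' : ℝ → ℂ}
    (hg : ∀ ρ, HasDerivAt g (g' ρ) ρ) (hg' : Continuous g') :
    k * ∫ ρ in 0..b, ρ * (g ρ * sinKernel k √(ρ ^ 2 + z ^ 2)) =
      g 0 * Complex.cos (k * z) - g b * Complex.cos (k * √(b ^ 2 + z ^ 2)) +
        ∫ ρ in 0..b, Complex.cos (k * √(ρ ^ 2 + z ^ 2)) * g' ρ := by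
  have hS : Continuous fun ρ : ℝ => (ρ : ℂ) * sinKernel k √(ρ ^ 2 + z ^ 2) :=
    Complex.continuous_ofReal.mul ((continuous_sinKernel k).comp (by fun_prop))
  have by_parts := intervalIntegral.integral_mul_deriv_eq_deriv_mul_of_hasDerivAt
    (a := 0) (b := b) (u := g) (v := fun ρ => Complex.cos (k * √(ρ ^ 2 + z ^ 2)))
    (fun ρ _ => (hg ρ).continuousAt.continuousWithinAt) (by fun_prop) (fun ρ _ => hg ρ)
    (fun ρ hρ => hasDerivAt_cos_mul_sqrt_sq_add_sq k (by rw [min_eq_left hb] at hρ; exact hρ.1) z)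
    (hg'.intervalIntegrable _ _) ((continuous_const.mul hS).intervalIntegrable _ _)
  simp only [mul_left_comm (g _), intervalIntegral.integral_const_mul, ne_eq, OfNat.ofNat_ne_zero,
    not_false_eq_true, zero_pow, zero_add, cos_mul_sqrt_sq, mul_comm (g' _)] at by_parts
  linear_combination -by_parts

end SineKernel

section RadialIntegral

theorem setIntegral_Ioi_eq_intervalIntegral {F : Type*} [NormedAddCommGroup F] [NormedSpace ℝ F]
    {f : ℝ → F} {a b : ℝ} (hab : a ≤ b) (hf : ∀ x, b < x → f x = 0) :
    ∫ x in Ioi a, f x = ∫ x in a..b, f x := by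
  rw [intervalIntegral.integral_of_le hab]
  exact setIntegral_eq_of_subset_of_forall_sdiff_eq_zero measurableSet_Ioi Ioc_subset_Ioi_self
    fun x hx => hf x (not_le.1 fun hxb => hx.2 ⟨hx.1, hxb⟩)

variable {V : Type*} [NormedAddCommGroup V] [NormedSpace ℝ V]

theorem exists_norm_integral_cos_sqrt_mul_derivFst_le {P : Set V} (hP : IsCompact P) (n : ℕ)
    {h : V → ℝ} (hh : ContDiff ℝ (n + 1) h) {A : ℝ × V → ℂ} (hA : ContDiff ℝ (n + 1) A)
    {δ b : ℝ} (hδ : 0 < δ) (hb : 0 < b) (c : ℝ) :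
    ∃ C, ∀ p ∈ P, (∀ ρ, |ρ| < δ → A (ρ, p) = 1) → (fun ρ => A (ρ, p)) =ᶠ[𝓝 b] 0 →
      ∀ k : ℂ, k ≠ 0 → |k.im| ≤ c →
        ‖∫ ρ in 0..b, Complex.cos (k * √(ρ ^ 2 + h p ^ 2)) * derivFst A (ρ, p)‖ ≤ C / ‖k‖ ^ n := by
  let U : Set (ℝ × V) := {x | 0 < x.1}
  have hU : IsOpen U := isOpen_lt continuous_const continuous_fst
  have hPU : uIcc (δ / 2) b ×ˢ P ⊆ U := fun x hx => (lt_min (half_pos hδ) hb).trans_le hx.1.1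
  have hA' : ContDiff ℝ n (derivFst A) :=
    contDiffOn_univ.1 (contDiffOn_derivFst isOpen_univ hA.contDiffOn)
  let φ : ℝ × V → ℝ := fun x => √(x.1 ^ 2 + h x.2 ^ 2)
  have hφ : ContDiffOn ℝ (n + 1) φ U := fun x (hx : 0 < x.1) =>
    (((contDiff_fst.pow 2).add ((hh.comp contDiff_snd).pow 2)).contDiffAt.sqrt
      (by positivity)).contDiffWithinAt
  have hφ' : ∀ x ∈ U, derivFst φ x ≠ 0 := fun x (hx : 0 < x.1) => by
    rw [derivFst, (hasDerivAt_sqrt_sq_add_sq hx (h x.2)).deriv]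
    positivity
  obtain ⟨C, hC⟩ := exists_norm_integral_cos_smul_le hP hU hPU n hφ hφ' hA'.contDiffOn c
  refine ⟨C, fun p hp hone hzero k hk hkc => ?_⟩
  have flat : ∀ ρ, |ρ| < δ → (fun t => derivFst A (t, p)) =ᶠ[𝓝 ρ] 0 := fun ρ hρ =>
    derivFst_eventuallyEq_zero (y := 1) <|
      (continuous_abs.continuousAt.eventually (gt_mem_nhds hρ)).mono hone
  have integrable : ∀ s t : ℝ, IntervalIntegrable (fun ρ =>
      Complex.cos (k * √(ρ ^ 2 + h p ^ 2)) * derivFst A (ρ, p)) volume s t := fun s t =>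
    Continuous.intervalIntegrable (Continuous.mul (by fun_prop)
      (hA'.continuous.comp (by fun_prop))) s t
  have inner_eq_zero : ∫ ρ in 0..(δ / 2),
      Complex.cos (k * √(ρ ^ 2 + h p ^ 2)) * derivFst A (ρ, p) = 0 := by
    refine intervalIntegral.integral_zero_ae (Filter.Eventually.of_forall fun ρ hρ => ?_)
    rw [uIoc_of_le (half_pos hδ).le] at hρ
    have hρδ : |ρ| < δ := by rw [abs_of_pos hρ.1]; linarith [hρ.2]
    rw [show derivFst A (ρ, p) = 0 from (flat ρ hρδ).self_of_nhds, mul_zero]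
  rw [← intervalIntegral.integral_add_adjacent_intervals (integrable 0 (δ / 2)) (integrable _ b),
    inner_eq_zero, zero_add]
  exact hC p hp (flat _ (by rw [abs_of_pos (half_pos hδ)]; linarith))
    (derivFst_eventuallyEq_zero hzero) k hk hkc

theorem exists_norm_integral_mul_sinKernel_sub_le {P : Set V} (hP : IsCompact P) (n : ℕ)
    {h : V → ℝ} (hh : ContDiff ℝ (n + 1) h) {A : ℝ × V → ℂ} (hA : ContDiff ℝ (n + 1) A)
    {δ b : ℝ} (hδ : 0 < δ) (hb : 0 ≤ b) (c : ℝ) :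
    ∃ C, ∀ p ∈ P, (∀ ρ, |ρ| < δ → A (ρ, p) = 1) → (∀ ρ, b < ρ → A (ρ, p) = 0) →
      ∀ k : ℂ, k ≠ 0 → |k.im| ≤ c →
        ‖(∫ ρ in Ioi (0 : ℝ), ρ * (A (ρ, p) * sinKernel k √(ρ ^ 2 + h p ^ 2))) -
          k⁻¹ * Complex.cos (k * h p)‖ ≤ C / ‖k‖ ^ (n + 1) := by
  obtain ⟨C, hC⟩ := exists_norm_integral_cos_sqrt_mul_derivFst_le hP n hh hA hδ
    (show 0 < b + 1 by linarith) c
  refine ⟨C, fun p hp hone hzero k hk hkc => ?_⟩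
  have by_parts := integral_mul_sinKernel k (h p) (show 0 ≤ b + 1 by linarith)
    (fun ρ => hasDerivAt_derivFst isOpen_univ hA.contDiffOn (by simp) (mem_univ (ρ, p)))
    ((contDiffOn_univ.1 (contDiffOn_derivFst isOpen_univ hA.contDiffOn)).continuous.comp
      (by fun_prop))
  rw [hone 0 (by simpa using hδ), hzero (b + 1) (by linarith), one_mul, zero_mul, sub_zero]
    at by_parts
  rw [setIntegral_Ioi_eq_intervalIntegral (show 0 ≤ b + 1 by linarith)
    fun ρ hρ => by rw [hzero ρ (by linarith), zero_mul, mul_zero],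
    (eq_inv_mul_iff_mul_eq₀ hk).2 by_parts, mul_add, add_sub_cancel_left, norm_mul, norm_inv,
    pow_succ ‖k‖, ← div_div, inv_mul_eq_div]
  gcongr
  exact hC p hp hone ((lt_mem_nhds (lt_add_one b)).mono hzero) k hk hkc

end RadialIntegral

section PolarCoordinates

open Metric Module

theorem integral_volumeIoiPow {F : Type*} [NormedAddCommGroup F] [NormedSpace ℝ F] (n : ℕ)
    (f : ℝ → F) :
    ∫ ρ : Ioi (0 : ℝ), f ρ ∂.volumeIoiPow n = ∫ ρ in Ioi (0 : ℝ), ρ ^ n • f ρ := by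
  simp only [Measure.volumeIoiPow, ENNReal.ofReal]
  rw [integral_withDensity_eq_integral_smul (measurable_subtype_coe.pow_const _).real_toNNReal,
    integral_subtype_comap measurableSet_Ioi fun ρ => Real.toNNReal (ρ ^ n) • f ρ]
  refine setIntegral_congr_fun measurableSet_Ioi fun ρ hρ => ?_
  simp only [NNReal.smul_def, Real.coe_toNNReal _ (pow_nonneg (mem_Ioi.1 hρ).le n)]

variable {E F : Type*} [NormedAddCommGroup E] [NormedSpace ℝ E] [FiniteDimensional ℝ E]
  [MeasurableSpace E] [BorelSpace E] [NormedAddCommGroup F] (μ : Measure E) [μ.IsAddHaarMeasure]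
  {f : E → F}

theorem integrable_toSphere_prod (hf : Integrable f μ) :
    Integrable (fun x : sphere (0 : E) 1 × Ioi (0 : ℝ) => f (x.2.1 • x.1.1))
      (μ.toSphere.prod (.volumeIoiPow (finrank ℝ E - 1))) := by
  rw [← μ.measurePreserving_homeomorphUnitSphereProd.integrable_comp_emb
    (Homeomorph.measurableEmbedding _)]
  have hcompl : Integrable (fun x : ({0}ᶜ : Set E) => f x) (μ.comap (↑)) :=
    (integrableOn_iff_comap_subtypeVal (measurableSet_singleton _).compl).1 hf.integrableOn
  convert hcompl using 2 with x
  simp [smul_smul, mul_inv_cancel₀ (norm_ne_zero_iff.2 x.2)]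

variable [Nontrivial E] [NormedSpace ℝ F]

theorem integral_eq_integral_toSphere (hf : Integrable f μ) :
    ∫ x, f x ∂μ =
      ∫ e : sphere (0 : E) 1, (∫ ρ in Ioi (0 : ℝ), ρ ^ (finrank ℝ E - 1) • f (ρ • (e : E)))
        ∂μ.toSphere :=
  calc
    ∫ x, f x ∂μ = ∫ x : ({0}ᶜ : Set E), f x ∂(μ.comap (↑)) := by
      rw [integral_subtype_comap (measurableSet_singleton _).compl, restrict_compl_singleton]
    _ = ∫ x : sphere (0 : E) 1 × Ioi (0 : ℝ), f (x.2.1 • x.1.1)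
          ∂(μ.toSphere.prod (.volumeIoiPow (finrank ℝ E - 1))) := by
      rw [← μ.measurePreserving_homeomorphUnitSphereProd.integral_comp
        (Homeomorph.measurableEmbedding _)]
      congr with x
      simp [smul_smul, mul_inv_cancel₀ (norm_ne_zero_iff.2 x.2)]
    _ = _ := by
      rw [integral_prod _ (integrable_toSphere_prod μ hf)]
      congr with e
      exact integral_volumeIoiPow _ fun ρ => f (ρ • (e : E))

theorem norm_integral_sub_toSphere_smul_le [CompleteSpace F] (hf : Integrable f μ) {y : F} {C : ℝ}
    (hC : ∀ e ∈ sphere (0 : E) 1,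
      ‖(∫ ρ in Ioi (0 : ℝ), ρ ^ (finrank ℝ E - 1) • f (ρ • e)) - y‖ ≤ C) :
    ‖(∫ x, f x ∂μ) - μ.toSphere.real univ • y‖ ≤ C * μ.toSphere.real univ := by
  have hray : Integrable (fun e : sphere (0 : E) 1 =>
      ∫ ρ in Ioi (0 : ℝ), ρ ^ (finrank ℝ E - 1) • f (ρ • e)) μ.toSphere := by
    refine (integrable_toSphere_prod μ hf).integral_prod_left.congr
      (Filter.Eventually.of_forall fun e => ?_)
    exact integral_volumeIoiPow _ fun ρ => f (ρ • (e : E))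
  rw [integral_eq_integral_toSphere μ hf, ← integral_const,
    ← integral_sub hray (integrable_const y)]
  exact norm_integral_le_of_norm_le_const (Filter.Eventually.of_forall fun e => hC e e.2)

theorem toSphere_real_univ_euclideanSpace_fin_two :
    (volume : Measure (EuclideanSpace ℝ (Fin 2))).toSphere.real univ = 2 * π := by
  simp [Measure.real, EuclideanSpace.volume_ball_fin_two,
    pi_nonneg]

end PolarCoordinates

section RadialCutoff

open Metric

theorem exists_forall_ray_eq_zero {E F : Type*} [NormedAddCommGroup E] [NormedSpace ℝ E] [Zero F]
    {η : E → F} (hη : HasCompactSupport η) {K : Set E} (hK : Bornology.IsBounded K) :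
    ∃ b : ℝ, 0 ≤ b ∧ ∀ x ∈ K, ∀ e ∈ sphere (0 : E) 1, ∀ ρ, b < ρ → η (x + ρ • e) = 0 := by
  obtain ⟨R, hR⟩ := hη.isCompact.isBounded.subset_closedBall 0
  obtain ⟨M, hM⟩ := hK.subset_closedBall 0
  refine ⟨max 0 (R + M), le_max_left _ _, fun x hx e he ρ hρ =>
    image_eq_zero_of_notMem_tsupport fun hmem => ?_⟩
  obtain ⟨hρ_pos, hρ_large⟩ := max_lt_iff.1 hρ
  have hsum : ‖x + ρ • e‖ ≤ R := mem_closedBall_zero_iff.1 (hR hmem)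
  have hx_le : ‖x‖ ≤ M := mem_closedBall_zero_iff.1 (hM hx)
  have hray : ‖ρ • e‖ = ρ := by
    rw [norm_smul, mem_sphere_zero_iff_norm.1 he, mul_one, Real.norm_of_nonneg hρ_pos.le]
  have htri : ‖ρ • e‖ ≤ ‖x + ρ • e‖ + ‖x‖ := by simpa using norm_sub_le (x + ρ • e) x
  linarith

theorem exists_norm_integral_ray_mul_sinKernel_sub_le {E : Type*} [NormedAddCommGroup E]
    [NormedSpace ℝ E] [ProperSpace E] (n : ℕ) {η : E → ℂ} (hη : ContDiff ℝ (n + 1) η)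
    (hsupp : HasCompactSupport η) {K : Set (E × ℝ)} (hK : IsCompact K) {δ : ℝ} (hδ : 0 < δ)
    (c : ℝ) :
    ∃ C, ∀ x ∈ K, (∀ v, ‖v‖ < δ → η (x.1 + v) = 1) → ∀ e ∈ sphere (0 : E) 1,
      ∀ k : ℂ, k ≠ 0 → |k.im| ≤ c →
        ‖(∫ ρ in Ioi (0 : ℝ), ρ * (η (x.1 + ρ • e) * sinKernel k √(ρ ^ 2 + x.2 ^ 2))) -
          k⁻¹ * Complex.cos (k * x.2)‖ ≤ C / ‖k‖ ^ (n + 1) := by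
  obtain ⟨b, hb, hzero⟩ := exists_forall_ray_eq_zero hsupp (hK.image continuous_fst).isBounded
  obtain ⟨C, hC⟩ := exists_norm_integral_mul_sinKernel_sub_le
    (hK.prod (isCompact_sphere (0 : E) 1)) n (h := fun p => p.1.2) (by fun_prop)
    (A := fun y => η (y.2.1.1 + y.1 • y.2.2)) (hη.comp (by fun_prop)) hδ hb c
  refine ⟨C, fun x hx hone e he k hk hkc => hC (x, e) ⟨hx, he⟩ (fun ρ hρ => hone _ ?_)
    (hzero x.1 (mem_image_of_mem _ hx) e he) k hk hkc⟩
  rwa [norm_smul, mem_sphere_zero_iff_norm.1 he, mul_one, Real.norm_eq_abs]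

theorem integrable_mul_sinKernel {E : Type*} [NormedAddCommGroup E] [MeasurableSpace E]
    [OpensMeasurableSpace E] (μ : Measure E) [IsFiniteMeasureOnCompacts μ] {η : E → ℂ}
    (hη : Continuous η) (hsupp : HasCompactSupport η) (k : ℂ) (x : E) (z : ℝ) :
    Integrable (fun v => η (x + v) * sinKernel k √(‖v‖ ^ 2 + z ^ 2)) μ :=
  Continuous.integrable_of_hasCompactSupport
    ((hη.comp (continuous_const_add x)).mul ((continuous_sinKernel k).comp (by fun_prop)))
    (hsupp.comp_homeomorph (Homeomorph.addLeft x)).mul_right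

end RadialCutoff

section PlanarSource

theorem norm_sub_emb2_proj32_add (r : E3) (v : E2) :
    ‖r - emb2 (proj32 r + v)‖ = √(‖v‖ ^ 2 + r 2 ^ 2) := by
  rw [EuclideanSpace.norm_eq, EuclideanSpace.norm_sq_eq]
  simp [Fin.sum_univ_three, Fin.sum_univ_two, emb2, proj32]

theorem pfun_eq_integral_sinKernel (η : E2 → ℝ) (k : ℂ) (r : E3) :
    pfun η k r = ∫ v : E2, (η (proj32 r + v) : ℂ) * sinKernel k √(‖v‖ ^ 2 + r 2 ^ 2) := by
  rw [pfun, ← integral_add_left_eq_self _ (proj32 r)]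
  simp only [Skern_eq_sinKernel_norm, norm_sub_emb2_proj32_add]

theorem continuous_proj32 : Continuous proj32 :=
  (PiLp.continuous_toLp 2 _).comp <| continuous_pi fun i => by
    fin_cases i
    · exact PiLp.continuous_apply 2 _ 0
    · exact PiLp.continuous_apply 2 _ 1

theorem div_norm_pow_le_div_re_pow {C : ℝ} (hC : 0 ≤ C) {k : ℂ} (hk : 1 ≤ k.re) {m n : ℕ}
    (hmn : m ≤ n) : C / ‖k‖ ^ n ≤ C / k.re ^ m := by
  have hre : k.re ≤ ‖k‖ := Complex.re_le_norm k
  have hpow : k.re ^ m ≤ ‖k‖ ^ n :=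
    (pow_le_pow_right₀ hk hmn).trans (pow_le_pow_left₀ (by linarith) hre n)
  gcongr

theorem stmt4_general (n : ℕ) {η : E2 → ℝ} (hη : ContDiff ℝ (n + 1) η)
    (hsupp : HasCompactSupport η) {K : Set E3} (hK : Bornology.IsBounded K) {δ : ℝ} (hδ : 0 < δ)
    (hone : ∀ r ∈ K, ∀ q : E2, ‖q - proj32 r‖ < δ → η q = 1) (c₀ : ℝ) :
    ∃ C, 0 ≤ C ∧ ∀ r ∈ K, ∀ k : ℂ, k ≠ 0 → |k.im| ≤ c₀ →
      ‖pfun η k r - 2 * π * k⁻¹ * Complex.cos (k * (r 2 : ℂ))‖ ≤ C / ‖k‖ ^ (n + 1) := by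
  have hcomp : IsCompact ((fun r : E3 => (proj32 r, r 2)) '' closure K) :=
    hK.isCompact_closure.image (continuous_proj32.prodMk (by fun_prop))
  have hηc : ContDiff ℝ (n + 1) fun q => (η q : ℂ) := Complex.ofRealCLM.contDiff.comp hη
  have hsuppc : HasCompactSupport fun q => (η q : ℂ) := hsupp.comp_left Complex.ofReal_zero
  obtain ⟨C, hC⟩ := exists_norm_integral_ray_mul_sinKernel_sub_le n hηc hsuppc hcomp hδ c₀
  refine ⟨|C| * (2 * π), by positivity, fun r hr k hk hkc => ?_⟩
  have hone_r : ∀ v, ‖v‖ < δ → (η (proj32 r + v) : ℂ) = 1 := fun v hv => by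
    rw [hone r hr _ (by rwa [add_sub_cancel_left]), Complex.ofReal_one]
  have hray : ∀ e ∈ Metric.sphere (0 : E2) 1, ‖(∫ ρ in Ioi (0 : ℝ), ρ ^ (Module.finrank ℝ E2 - 1) •
      ((η (proj32 r + ρ • e) : ℂ) * sinKernel k √(‖ρ • e‖ ^ 2 + r 2 ^ 2))) -
        k⁻¹ * Complex.cos (k * r 2)‖ ≤ C / ‖k‖ ^ (n + 1) := fun e he => by
    have hC_ray := hC _ (mem_image_of_mem _ (subset_closure hr)) hone_r e he k hk hkc
    simpa [norm_smul, mem_sphere_zero_iff_norm.1 he] using hC_ray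
  have hpolar := norm_integral_sub_toSphere_smul_le volume
    (integrable_mul_sinKernel volume hηc.continuous hsuppc k (proj32 r) (r 2)) hray
  rw [← pfun_eq_integral_sinKernel, toSphere_real_univ_euclideanSpace_fin_two] at hpolar
  calc ‖pfun η k r - 2 * π * k⁻¹ * Complex.cos (k * (r 2 : ℂ))‖
      = ‖pfun η k r - (2 * π) • (k⁻¹ * Complex.cos (k * r 2))‖ := by
        rw [Complex.real_smul]; push_cast; ring_nf
    _ ≤ C / ‖k‖ ^ (n + 1) * (2 * π) := hpolar
    _ ≤ |C| * (2 * π) / ‖k‖ ^ (n + 1) := by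
        rw [div_mul_eq_mul_div]; gcongr; exact le_abs_self C

end PlanarSource

theorem stmt4 (η : E2 → ℝ) (hη : ContDiff ℝ (⊤ : ℕ∞) η) (hsupp : HasCompactSupport η)
    (K : Set E3) (hK : IsCompact K) (δ : ℝ) (hδ : 0 < δ)
    (hone : ∀ r ∈ K, ∀ q : E2, ‖q - proj32 r‖ ≤ 2 * δ → η q = 1) :
    ∀ c₀ > (0:ℝ), ∀ n : ℕ, ∃ C : ℝ, ∀ r ∈ K, ∀ k : ℂ,
      1 ≤ k.re → |k.im| ≤ c₀ →
      ‖pfun η k r - 2 * π * k⁻¹ * Complex.cos (k * (r 2 : ℂ))‖ ≤ C / k.re ^ n := by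
  intro c₀ _ n
  obtain ⟨C, hC_nonneg, hC⟩ := stmt4_general n (hη.of_le (mod_cast le_top)) hsupp hK.isBounded
    (show 0 < 2 * δ by linarith) (fun r hr q hq => hone r hr q hq.le) c₀
  exact ⟨C, fun r hr k hk hkc => (hC r hr k (Complex.ne_zero_of_re_pos (by linarith)) hkc).trans
    (div_norm_pow_le_div_re_pow hC_nonneg hk n.le_succ)⟩

end
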